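/- arXiv:2605.12820 — 3 statements merged into one kernel-verified Lean document; each statement's English description precedes it below -/
import Mathlib

section
/- Let f : ℝⁿ → ℝ be differentiable and strongly convex with constant μ > 0. Let x ∈ ℝⁿ with ∇f(x) ≠ 0. Then there exists one and only one t > 0 such that f(x - t•∇f(x)) = f(x). -/
lemma aux_one_dim (g : ℝ → ℝ) (c m : ℝ) (hc : 0 < c) (hm : 0 < m) (hcont : Continuous g)
    (hd : HasDerivAt g (-m) 0)
    (h : ∀ b s : ℝ, 0 ≤ s → s ≤ 1 → g (s * b) ≤ s * g b + (1 - s) * g 0 - c * s * (1 - s) * b ^ 2) :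
    ∃! t : ℝ, 0 < t ∧ g t = g 0 := by
  have key : ∀ a b : ℝ, 0 < a → a ≤ b →
      b * (g a - g 0) + c * a * (b - a) * b ≤ a * (g b - g 0) := by
    intro a b ha hab
    have hb : 0 < b := ha.trans_le hab
    have h1 := h b (a / b) (by positivity) ((div_le_one hb).2 hab)
    have e : a / b * b = a := by field_simp
    rw [e] at h1
    have h2 := mul_le_mul_of_nonneg_left h1 hb.le
    have e2 : b * (a / b * g b + (1 - a / b) * g 0 - c * (a / b) * (1 - a / b) * b ^ 2)
        = a * g b + (b - a) * g 0 - c * a * (b - a) * b := by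
      field_simp
    rw [e2] at h2
    linarith
  have uniq : ∀ a b : ℝ, 0 < a → a < b → g a = g 0 → g b = g 0 → False := by
    intro a b ha hab h1 h2
    have h3 := key a b ha hab.le
    rw [h1, h2] at h3
    have : 0 < c * a * (b - a) * b :=
      mul_pos (mul_pos (mul_pos hc ha) (sub_pos.2 hab)) (ha.trans hab)
    linarith
  obtain ⟨t0, ht0, hg0⟩ : ∃ t0 : ℝ, 0 < t0 ∧ g t0 < g 0 := by
    have h1 := hd.hasDerivWithinAt (s := Set.Ioi 0)
    rw [hasDerivWithinAt_iff_tendsto_slope' (by simp)] at h1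
    have h2 := h1.eventually (gt_mem_nhds (show -m < 0 by linarith))
    obtain ⟨t, ht, ht'⟩ := (h2.and self_mem_nhdsWithin).exists
    have ht'' : 0 < t := ht'
    refine ⟨t, ht'', ?_⟩
    rw [slope_def_field, sub_zero, div_neg_iff] at ht
    rcases ht with h | h <;> linarith [h.1, h.2]
  obtain ⟨T, hT, hgT⟩ : ∃ T : ℝ, t0 ≤ T ∧ g 0 ≤ g T := by
    refine ⟨t0 + (g 0 - g t0) / (c * t0), ?_, ?_⟩
    · have : 0 < (g 0 - g t0) / (c * t0) := div_pos (by linarith) (by positivity)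
      linarith
    · have hp : 0 < (g 0 - g t0) / (c * t0) := div_pos (by linarith) (by positivity)
      have hk := key t0 (t0 + (g 0 - g t0) / (c * t0)) ht0 (by linarith)
      have e : c * t0 * (t0 + (g 0 - g t0) / (c * t0) - t0) = g 0 - g t0 := by
        field_simp
        ring
      rw [e] at hk
      have : 0 ≤ t0 * (g (t0 + (g 0 - g t0) / (c * t0)) - g 0) := by
        refine le_trans (le_of_eq ?_) hk
        ring
      have := nonneg_of_mul_nonneg_right this ht0
      linarith
  obtain ⟨t, ht, hgt⟩ := intermediate_value_Icc hT hcont.continuousOn ⟨hg0.le, hgT⟩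
  have htp : 0 < t := ht0.trans_le ht.1
  refine ⟨t, ⟨htp, hgt⟩, ?_⟩
  rintro y ⟨hy, hgy⟩
  rcases lt_trichotomy y t with h1 | h1 | h1
  · exact (uniq y t hy h1 hgy hgt).elim
  · exact h1
  · exact (uniq t y htp h1 hgt hgy).elim

/-- For a differentiable strongly convex function and a non-stationary
point `x`, there is exactly one `t > 0` with `f (x - t • ∇f x) = f x`. -/
theorem exists_unique_pos_step_same_level
    {n : ℕ} (f : EuclideanSpace ℝ (Fin n) → ℝ) (μ : ℝ) (hμ : 0 < μ)
    (hdiff : Differentiable ℝ f)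
    (hsc : ∀ x y : EuclideanSpace ℝ (Fin n), ∀ t : ℝ, t ∈ Set.Icc (0:ℝ) 1 →
      f (t • x + (1 - t) • y) ≤ t * f x + (1 - t) * f y - (μ / 2) * t * (1 - t) * ‖x - y‖ ^ 2)
    (x : EuclideanSpace ℝ (Fin n)) (hx : gradient f x ≠ 0) :
    ∃! t : ℝ, 0 < t ∧ f (x - t • gradient f x) = f x := by
  have hv : 0 < ‖gradient f x‖ := norm_pos_iff.2 hx
  have hgr := (hdiff x).hasGradientAt.hasFDerivAt
  generalize gradient f x = v at *
  have hline : HasDerivAt (fun t : ℝ => x - t • v) (-v) 0 := by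
    simpa using ((hasDerivAt_id (0 : ℝ)).smul_const v).const_sub x
  have hgr' : HasFDerivAt f (InnerProductSpace.toDual ℝ _ v) (x - (0 : ℝ) • v) := by
    simpa using hgr
  have hd := hgr'.comp_hasDerivAt (0 : ℝ) hline
  have hmain := aux_one_dim (fun t : ℝ => f (x - t • v)) (μ / 2 * ‖v‖ ^ 2) (‖v‖ ^ 2)
    (by positivity) (by positivity) (hdiff.continuous.comp (by fun_prop))
    (by
      have e : (InnerProductSpace.toDual ℝ _ v) (-v) = -‖v‖ ^ 2 := by
        simp
      rw [← e]
      exact hd)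
    (by
      intro b s h0 h1
      have h2 := hsc (x - b • v) x s ⟨h0, h1⟩
      have e1 : s • (x - b • v) + (1 - s) • x = x - (s * b) • v := by module
      have e2 : ‖x - b • v - x‖ ^ 2 = b ^ 2 * ‖v‖ ^ 2 := by
        rw [sub_sub_cancel_left, norm_neg, norm_smul, mul_pow, Real.norm_eq_abs, sq_abs]
      rw [e1, e2] at h2
      simp only [zero_smul, sub_zero]
      linarith)
  simpa using hmain
end

section
/- Let f : ℝⁿ → ℝ be continuously differentiable and strongly convex with constant μ > 0, and fix x⁰ ∈ ℝⁿ. Then for every η > 0 there exists τ > 0 such that for every x with f(x) ≤ f(x⁰) and ‖∇f(x)‖ ≥ η, one has f(x - t•∇f(x)) ≤ f(x) - (η²/2)·t for all t ∈ [0, τ]. -/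
theorem aux_first_order {n : ℕ} (f : EuclideanSpace ℝ (Fin n) → ℝ) (μ : ℝ)
    (hC1 : ContDiff ℝ 1 f)
    (hsc : ∀ x y : EuclideanSpace ℝ (Fin n), ∀ t : ℝ, t ∈ Set.Icc (0:ℝ) 1 →
      f (t • x + (1 - t) • y) ≤ t * f x + (1 - t) * f y - (μ / 2) * t * (1 - t) * ‖x - y‖ ^ 2)
    (x y : EuclideanSpace ℝ (Fin n)) :
    inner ℝ (gradient f y) (x - y) ≤ f x - f y - μ / 2 * ‖x - y‖ ^ 2 := by
  have hd : DifferentiableAt ℝ f y := (hC1.differentiable (by norm_num)) y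
  have hg : HasFDerivAt f (InnerProductSpace.toDual ℝ _ (gradient f y)) y :=
    hd.hasGradientAt.hasFDerivAt
  have hl : HasDerivAt (fun t : ℝ => y + t • (x - y)) (x - y) 0 := by
    simpa using ((hasDerivAt_id (0:ℝ)).smul_const (x - y)).const_add y
  have hφ : HasDerivAt (fun t : ℝ => f (y + t • (x - y))) (inner ℝ (gradient f y) (x - y)) 0 := by
    have hg' : HasFDerivAt f (InnerProductSpace.toDual ℝ _ (gradient f y))
        (y + (0:ℝ) • (x - y)) := by simpa using hg
    have := hg'.comp_hasDerivAt (0:ℝ) hl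
    simpa [Function.comp_def] using this
  have ht := hφ.tendsto_slope_zero_right
  have hr : Filter.Tendsto (fun t : ℝ => f x - f y - μ / 2 * (1 - t) * ‖x - y‖ ^ 2)
      (nhdsWithin 0 (Set.Ioi 0)) (nhds (f x - f y - μ / 2 * ‖x - y‖ ^ 2)) := by
    have : Continuous (fun t : ℝ => f x - f y - μ / 2 * (1 - t) * ‖x - y‖ ^ 2) := by fun_prop
    have h := this.tendsto 0
    simp only [sub_zero, mul_one] at h
    exact h.mono_left nhdsWithin_le_nhds
  refine le_of_tendsto_of_tendsto ht hr ?_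
  filter_upwards [Ioc_mem_nhdsGT (zero_lt_one : (0:ℝ) < 1)] with t ht
  have h := hsc x y t ⟨ht.1.le, ht.2⟩
  have e : t • x + (1 - t) • y = y + t • (x - y) := by module
  rw [e] at h
  simp only [zero_add, zero_smul, add_zero, smul_eq_mul]
  rw [inv_mul_le_iff₀ ht.1]
  linarith

/-- Uniform sufficient decrease along the negative gradient on the
sublevel set, for points with gradient norm at least η. -/
theorem uniform_descent_on_sublevel_set
    {n : ℕ} (f : EuclideanSpace ℝ (Fin n) → ℝ) (μ : ℝ) (hμ : 0 < μ)
    (hC1 : ContDiff ℝ 1 f)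
    (hsc : ∀ x y : EuclideanSpace ℝ (Fin n), ∀ t : ℝ, t ∈ Set.Icc (0:ℝ) 1 →
      f (t • x + (1 - t) • y) ≤ t * f x + (1 - t) * f y - (μ / 2) * t * (1 - t) * ‖x - y‖ ^ 2)
    (x0 : EuclideanSpace ℝ (Fin n)) :
    ∀ η : ℝ, 0 < η → ∃ τ : ℝ, 0 < τ ∧
      ∀ x : EuclideanSpace ℝ (Fin n), f x ≤ f x0 → η ≤ ‖gradient f x‖ →
        ∀ t ∈ Set.Icc (0:ℝ) τ,
          f (x - t • gradient f x) ≤ f x - (η ^ 2 / 2) * t := by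
  intro η hη
  have hfo := aux_first_order f μ hC1 hsc
  have hcont : Continuous (gradient f) := by
    have h := hC1.continuous_fderiv (by norm_num)
    exact (InnerProductSpace.toDual ℝ (EuclideanSpace ℝ (Fin n))).symm.continuous.comp h
  set R := 2 * ‖gradient f x0‖ / μ with hR
  have hK : IsCompact (Metric.closedBall x0 R) := isCompact_closedBall _ _
  have hmem : ∀ x, f x ≤ f x0 → x ∈ Metric.closedBall x0 R := by
    intro x hx
    rw [Metric.mem_closedBall, dist_eq_norm, hR, le_div_iff₀ hμ]
    have h1 := hfo x x0
    have h2 := abs_le.1 (abs_real_inner_le_norm (gradient f x0) (x - x0))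
    by_contra! hc
    have hp : 0 < ‖x - x0‖ := by
      by_contra! h0
      have := norm_nonneg (gradient f x0)
      nlinarith
    nlinarith [mul_lt_mul_of_pos_right hc hp]
  obtain ⟨M, hM⟩ := hK.exists_bound_of_continuousOn hcont.continuousOn
  have hu := hK.uniformContinuousAt_of_continuousAt (gradient f)
    (fun x _ => hcont.continuousAt) (Metric.dist_mem_uniformity (half_pos hη))
  obtain ⟨δ, hδ, hδ'⟩ := Metric.mem_uniformity_dist.1 hu
  have hM1 : 0 < |M| + 1 := by positivity
  refine ⟨δ / 2 / (|M| + 1), by positivity, ?_⟩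
  intro x hx hgx t ht
  have hxK := hmem x hx
  set g := gradient f x with hg
  have hgM : ‖g‖ ≤ |M| + 1 := by linarith [hM x hxK, le_abs_self M]
  have hdist : dist x (x - t • g) < δ := by
    rw [dist_eq_norm, sub_sub_cancel, norm_smul, Real.norm_of_nonneg ht.1]
    have h1 := (le_div_iff₀ hM1).1 ht.2
    have h2 := mul_le_mul_of_nonneg_left hgM ht.1
    linarith
  have hclose : dist g (gradient f (x - t • g)) < η / 2 := hδ' hdist hxK
  rw [dist_eq_norm] at hclose
  have h1 := hfo x (x - t • g)
  rw [sub_sub_cancel, inner_smul_right] at h1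
  set k := gradient f (x - t • g)
  have h2 := (abs_le.1 (abs_real_inner_le_norm (g - k) g)).2
  rw [inner_sub_left, real_inner_self_eq_norm_sq] at h2
  have h3 : η ^ 2 / 2 ≤ inner ℝ k g := by
    nlinarith [norm_nonneg g, mul_le_mul_of_nonneg_right hclose.le (norm_nonneg g)]
  have h4 := mul_le_mul_of_nonneg_left h3 ht.1
  have h5 : 0 ≤ μ / 2 * ‖t • g‖ ^ 2 := by positivity
  linarith
end

section
/- Let f : ℝⁿ → ℝ be continuously differentiable and strongly convex with constant μ > 0, and let x* be its (unique) global minimizer. Let (xᵏ)_{k≥0} be a sequence in ℝⁿ and (tₖ) a sequence of positive reals such that for every k: ∇f(xᵏ) ≠ 0, f(xᵏ - tₖ•∇f(xᵏ)) = f(xᵏ), and f(xᵏ⁺¹) ≤ f(xᵏ - (tₖ/2)•∇f(xᵏ)). Then xᵏ → x* as k → ∞. -/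
/-- Convergence of the Method of Ellipcenters for strongly convex
continuously differentiable functions. -/
theorem ME_convergence
    {n : ℕ} (f : EuclideanSpace ℝ (Fin n) → ℝ) (μ : ℝ) (hμ : 0 < μ)
    (hC1 : ContDiff ℝ 1 f)
    (hsc : ∀ x y : EuclideanSpace ℝ (Fin n), ∀ s : ℝ, s ∈ Set.Icc (0:ℝ) 1 →
      f (s • x + (1 - s) • y) ≤ s * f x + (1 - s) * f y - (μ / 2) * s * (1 - s) * ‖x - y‖ ^ 2)
    (xstar : EuclideanSpace ℝ (Fin n)) (hmin : ∀ y, f xstar ≤ f y)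
    (x : ℕ → EuclideanSpace ℝ (Fin n)) (t : ℕ → ℝ)
    (ht : ∀ k, 0 < t k)
    (hgrad : ∀ k, gradient f (x k) ≠ 0)
    (hlevel : ∀ k, f (x k - t k • gradient f (x k)) = f (x k))
    (hnext : ∀ k, f (x (k + 1)) ≤ f (x k - (t k / 2) • gradient f (x k))) :
    Filter.Tendsto x Filter.atTop (nhds xstar) := by
  have hdiff : Differentiable ℝ f := hC1.differentiable (by norm_num)
  have hcont : Continuous (fderiv ℝ f) := hC1.continuous_fderiv (by norm_num)
  have hG : Continuous (gradient f) :=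
    (InnerProductSpace.toDual ℝ (EuclideanSpace ℝ (Fin n))).symm.continuous.comp hcont
  -- line derivative
  have hline : ∀ (a v : EuclideanSpace ℝ (Fin n)) (s : ℝ),
      HasDerivAt (fun s : ℝ => f (a + s • v)) (inner ℝ (gradient f (a + s • v)) v) s := by
    intro a v s
    have h1 : HasDerivAt (fun s : ℝ => a + s • v) v s := by
      simpa using ((hasDerivAt_id s).smul_const v).const_add a
    have h2 := (hdiff (a + s • v)).hasFDerivAt.comp_hasDerivAt s h1
    rw [inner_gradient_left]
    exact h2
  -- growth
  have hgrow : ∀ y, ‖y - xstar‖ ^ 2 ≤ (4 / μ) * (f y - f xstar) := by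
    intro y
    have h := hsc y xstar (1/2) (by norm_num)
    have h' := hmin ((1/2 : ℝ) • y + (1 - 1/2 : ℝ) • xstar)
    rw [div_mul_eq_mul_div, le_div_iff₀ hμ]
    nlinarith
  -- gradient inequality
  have hgi : ∀ a, f a - f xstar ≤ ‖gradient f a‖ * ‖a - xstar‖ := by
    intro a
    have h0 := hline a (xstar - a) 0
    simp only [zero_smul, add_zero] at h0
    have hlim := h0.tendsto_slope_zero_right
    have hle : inner ℝ (gradient f a) (xstar - a) ≤ f xstar - f a := by
      refine le_of_tendsto hlim ?_
      have : Set.Ioo (0:ℝ) 1 ∈ nhdsWithin (0:ℝ) (Set.Ioi 0) := Ioo_mem_nhdsGT one_pos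
      filter_upwards [this] with s hs
      have h := hsc xstar a s ⟨hs.1.le, hs.2.le⟩
      have e : s • xstar + (1 - s) • a = a + s • (xstar - a) := by module
      rw [e] at h
      have hp : 0 ≤ (μ / 2) * s * (1 - s) * ‖xstar - a‖ ^ 2 := by
        have := hs.1; have : 0 < 1 - s := by linarith [hs.2]
        positivity
      simp only [zero_add, zero_smul, add_zero, smul_eq_mul]
      rw [inv_mul_le_iff₀ hs.1]
      linarith
    have h3 := real_inner_le_norm (gradient f a) (a - xstar)
    have h4 : inner ℝ (gradient f a) (xstar - a) = - inner ℝ (gradient f a) (a - xstar) := by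
      rw [← inner_neg_right, neg_sub]
    linarith
  -- decrease
  have hdec : ∀ k, μ / 8 * ‖t k • gradient f (x k)‖ ^ 2 ≤ f (x k) - f (x (k+1)) := by
    intro k
    have h := hsc (x k) (x k - t k • gradient f (x k)) (1/2) (by norm_num)
    have e : (1/2 : ℝ) • x k + (1 - 1/2 : ℝ) • (x k - t k • gradient f (x k))
      = x k - (t k / 2) • gradient f (x k) := by module
    rw [e, hlevel, sub_sub_cancel] at h
    have := hnext k
    linarith
  have hanti : Antitone (fun k => f (x k)) := by
    refine antitone_nat_of_succ_le fun k => ?_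
    have := hdec k
    have : 0 ≤ μ / 8 * ‖t k • gradient f (x k)‖ ^ 2 := by positivity
    linarith
  have hconv := tendsto_atTop_ciInf hanti ⟨f xstar, by rintro _ ⟨k, rfl⟩; exact hmin _⟩
  have hd0 : Filter.Tendsto (fun k => f (x k) - f (x (k+1))) Filter.atTop (nhds 0) := by
    simpa using hconv.sub (hconv.comp (Filter.tendsto_add_atTop_nat 1))
  have hd : Filter.Tendsto (fun k => ‖t k • gradient f (x k)‖) Filter.atTop (nhds 0) := by
    have h1 : Filter.Tendsto (fun k => ‖t k • gradient f (x k)‖ ^ 2) Filter.atTop (nhds 0) := by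
      refine squeeze_zero (fun k => by positivity) (fun k => ?_)
        (by simpa using hd0.const_mul (8 / μ))
      have := hdec k
      rw [div_mul_eq_mul_div, le_div_iff₀ hμ]
      linarith
    have h2 := h1.sqrt
    simpa using h2
  -- boundedness
  set R := Real.sqrt ((4 / μ) * (f (x 0) - f xstar)) with hR
  have hball : ∀ y, f y ≤ f (x 0) → y ∈ Metric.closedBall xstar R := by
    intro y hy
    rw [mem_closedBall_iff_norm]
    apply Real.le_sqrt_of_sq_le
    refine (hgrow y).trans ?_
    gcongr
  have hxb : ∀ k, x k ∈ Metric.closedBall xstar R := fun k => hball _ (hanti (Nat.zero_le k))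
  have huc := (isCompact_closedBall xstar R).uniformContinuousOn_of_continuous hG.continuousOn
  rw [Metric.uniformContinuousOn_iff] at huc
  have hg0 : Filter.Tendsto (fun k => ‖gradient f (x k)‖) Filter.atTop (nhds 0) := by
    rw [Metric.tendsto_atTop]
    intro ε hε
    obtain ⟨δ, hδ, huc⟩ := huc ε hε
    rw [Metric.tendsto_atTop] at hd
    obtain ⟨N, hN⟩ := hd δ hδ
    refine ⟨N, fun k hk => ?_⟩
    have hk := hN k hk
    simp only [dist_zero_right, norm_norm] at hk ⊢
    set g := gradient f (x k) with hg
    obtain ⟨c, hc, hc'⟩ := exists_hasDerivAt_eq_slope (fun s : ℝ => f (x k + s • (-(t k • g)))) _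
      one_pos (fun s _ => (hline _ _ s).continuousAt.continuousWithinAt) (fun s _ => hline _ _ s)
    set ξ := x k + c • (-(t k • g)) with hξ
    have hyb : x k - t k • g ∈ Metric.closedBall xstar R :=
      hball _ ((hlevel k).le.trans (hanti (Nat.zero_le k)))
    have hξb : ξ ∈ Metric.closedBall xstar R := by
      have := (convex_closedBall xstar R) (hxb k) hyb (a := 1 - c) (b := c)
        (by linarith [hc.2]) hc.1.le (by ring)
      convert this using 1
      rw [hξ]; module
    have horth : inner ℝ (gradient f ξ) g = 0 := by
      simp only [one_smul, zero_smul, add_zero, ← sub_eq_add_neg, hlevel k, hg, sub_self, zero_div,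
        inner_neg_right, inner_smul_right, neg_eq_zero, mul_eq_zero] at hc'
      exact hc'.resolve_left (ht k).ne'
    have hdist : dist (x k) ξ < δ := by
      have e : x k - ξ = c • (t k • g) := by rw [hξ]; module
      rw [dist_eq_norm, e, norm_smul, Real.norm_of_nonneg hc.1.le]
      refine lt_of_le_of_lt ?_ hk
      exact mul_le_of_le_one_left (norm_nonneg _) hc.2.le
    have h5 := huc _ (hxb k) _ hξb hdist
    rw [dist_eq_norm, ← hg] at h5
    refine lt_of_le_of_lt ?_ h5
    have h6 := real_inner_le_norm (g - gradient f ξ) g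
    rw [inner_sub_left, horth, sub_zero, real_inner_self_eq_norm_sq, sq] at h6
    exact le_of_mul_le_mul_right h6 (norm_pos_iff.2 (hgrad k))
  rw [tendsto_iff_norm_sub_tendsto_zero]
  refine squeeze_zero (fun _ => norm_nonneg _) (fun k => ?_)
    (by simpa using hg0.const_mul (4 / μ))
  have h1 := hgrow (x k)
  have h2 := hgi (x k)
  rcases (norm_nonneg (x k - xstar)).eq_or_lt with h | h
  · rw [← h]; positivity
  · refine le_of_mul_le_mul_right ?_ h
    rw [← sq, mul_assoc]
    exact h1.trans (by gcongr)
end
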